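/- Let E be a unital trace-preserving completely positive map on d×d complex matrices and let E† be its adjoint with respect to the Hilbert–Schmidt inner product, i.e. Tr(E†(A)† B) = Tr(A† E(B)) for all d×d matrices A, B. Then the fixed-point sets of E and E† coincide: E(X) = X holds if and only if E†(X) = X. -/

import Mathlib

open Matrix
open scoped ComplexOrder

/-- Matrix power `A ^ t` for real `t`, via the continuous functional calculus
(applying `x ↦ x ^ t` to the eigenvalues of a Hermitian matrix `A`). -/
noncomputable def mpow {d : ℕ} (A : Matrix (Fin d) (Fin d) ℂ) (t : ℝ) :
    Matrix (Fin d) (Fin d) ℂ :=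
  cfc (fun x : ℝ => x ^ t) A

/-- The Tsallis-based relative entropy
`S̃_a(ρ|σ) = ((Tr (ρ^a σ^(1-a)))^(1/a) - 1) / (a - 1)`. -/
noncomputable def tsallis {d : ℕ} (a : ℝ) (ρ σ : Matrix (Fin d) (Fin d) ℂ) : ℝ :=
  ((((mpow ρ a * mpow σ (1 - a)).trace).re) ^ (1 / a) - 1) / (a - 1)

/-!
If `E` is trace preserving and unital with Kraus operators `K i`, and `E X = X`, then
`∑ i, [K i, X] [K i, X]ᴴ = E (X Xᴴ) - X Xᴴ`, whose trace vanishes. By faithfulness of the trace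
every `K i` commutes with `X`, so `E† X = (∑ i, (K i)ᴴ K i) X = X`. The converse is the same
argument for the Kraus operators `(K i)ᴴ` of `E†`.
-/

section KrausMap

variable {ι m n R : Type*} [Fintype ι] [Fintype n] [CommSemiring R] [StarRing R]

/-- The completely positive map `X ↦ ∑ i, K i * X * (K i)ᴴ` with Kraus operators `K i`. It is
trace preserving when `∑ i, (K i)ᴴ * K i = 1`. Its Hilbert–Schmidt adjoint is the map with Kraus
operators `(K i)ᴴ`. -/
def krausMap (K : ι → Matrix m n R) : Matrix n n R →ₗ[R] Matrix m m R where
  toFun X := ∑ i, K i * X * (K i)ᴴ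
  map_add' X Y := by simp only [Matrix.mul_add, Matrix.add_mul, Finset.sum_add_distrib]
  map_smul' c X := by
    simp only [Matrix.mul_smul, Matrix.smul_mul, Finset.smul_sum, RingHom.id_apply]

theorem krausMap_apply (K : ι → Matrix m n R) (X : Matrix n n R) :
    krausMap K X = ∑ i, K i * X * (K i)ᴴ :=
  rfl

theorem krausMap_one [DecidableEq n] (K : ι → Matrix m n R) :
    krausMap K 1 = ∑ i, K i * (K i)ᴴ := by
  simp only [krausMap_apply, Matrix.mul_one]

theorem conjTranspose_krausMap (K : ι → Matrix m n R) (X : Matrix n n R) :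
    (krausMap K X)ᴴ = krausMap K Xᴴ := by
  simp only [krausMap_apply, conjTranspose_sum, conjTranspose_mul, conjTranspose_conjTranspose,
    Matrix.mul_assoc]

variable [Fintype m]

theorem trace_mul_krausMap (K : ι → Matrix m n R) (A : Matrix m m R) (B : Matrix n n R) :
    (A * krausMap K B).trace = (krausMap (fun i => (K i)ᴴ) A * B).trace := by
  simp only [krausMap_apply, Finset.mul_sum, Finset.sum_mul, trace_sum,
    conjTranspose_conjTranspose]
  refine Finset.sum_congr rfl fun i _ => ?_
  calc (A * (K i * B * (K i)ᴴ)).trace = (A * K i * B * (K i)ᴴ).trace := by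
        simp only [Matrix.mul_assoc]
    _ = ((K i)ᴴ * A * K i * B).trace := by
        rw [trace_mul_comm]
        simp only [Matrix.mul_assoc]

theorem trace_krausMap [DecidableEq n] {K : ι → Matrix m n R}
    (hTP : ∑ i, (K i)ᴴ * K i = 1) (X : Matrix n n R) : (krausMap K X).trace = X.trace := by
  classical
  have hdual : krausMap (fun i => (K i)ᴴ) 1 = 1 := by
    simpa only [krausMap_one, conjTranspose_conjTranspose] using hTP
  simpa only [hdual, Matrix.one_mul] using trace_mul_krausMap K 1 X

theorem eq_krausMap_conjTranspose_of_trace_adjoint {K : ι → Matrix m n R}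
    {Edag : Matrix m m R → Matrix n n R}
    (hAdj : ∀ A B, ((Edag A)ᴴ * B).trace = (Aᴴ * krausMap K B).trace) (X : Matrix m m R) :
    Edag X = krausMap (fun i => (K i)ᴴ) X := by
  refine conjTranspose_injective (ext_iff_trace_mul_right.2 fun B => ?_)
  rw [hAdj, trace_mul_krausMap, conjTranspose_krausMap]

theorem krausMap_conjTranspose_eq_self_of_commute [DecidableEq m] {K : ι → Matrix m m R}
    (hTP : ∑ i, (K i)ᴴ * K i = 1) {X : Matrix m m R} (hX : ∀ i, Commute (K i) X) :
    krausMap (fun i => (K i)ᴴ) X = X := by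
  calc krausMap (fun i => (K i)ᴴ) X = (∑ i, (K i)ᴴ * K i) * X := by
        simp only [krausMap_apply, conjTranspose_conjTranspose, Finset.sum_mul, Matrix.mul_assoc,
          (hX _).eq]
    _ = X := by rw [hTP, Matrix.one_mul]

end KrausMap

section FixedPoints

variable {ι m R : Type*} [Fintype ι] [Fintype m] [DecidableEq m] [CommRing R] [StarRing R]

theorem sum_commutator_mul_conjTranspose (K : ι → Matrix m m R) (X : Matrix m m R) :
    ∑ i, (K i * X - X * K i) * (K i * X - X * K i)ᴴ =
      krausMap K (X * Xᴴ) - krausMap K X * Xᴴ - X * krausMap K Xᴴ + X * krausMap K 1 * Xᴴ := by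
  simp only [krausMap_apply, Finset.sum_mul, Finset.mul_sum, ← Finset.sum_sub_distrib,
    ← Finset.sum_add_distrib, conjTranspose_sub, conjTranspose_mul]
  exact Finset.sum_congr rfl fun i _ => by noncomm_ring

variable [PartialOrder R] [StarOrderedRing R] [NoZeroDivisors R]

theorem commute_of_krausMap_eq_self {K : ι → Matrix m m R} (hTP : ∑ i, (K i)ᴴ * K i = 1)
    (hUnital : krausMap K 1 = 1) {X : Matrix m m R} (hX : krausMap K X = X) (i : ι) :
    Commute (K i) X := by
  have hX' : krausMap K Xᴴ = Xᴴ := by rw [← conjTranspose_krausMap, hX]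
  have hsum : ∑ i, ((K i * X - X * K i) * (K i * X - X * K i)ᴴ).trace = 0 := by
    rw [← trace_sum, sum_commutator_mul_conjTranspose, hX, hX', hUnital, Matrix.mul_one,
      sub_add_cancel, trace_sub, trace_krausMap hTP, sub_self]
  have htrace : ((K i * X - X * K i) * (K i * X - X * K i)ᴴ).trace = 0 :=
    (Finset.sum_eq_zero_iff_of_nonneg fun _ _ =>
      (posSemidef_self_mul_conjTranspose _).trace_nonneg).1 hsum i (Finset.mem_univ i)
  exact sub_eq_zero.1 (trace_mul_conjTranspose_self_eq_zero_iff.1 htrace)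

theorem krausMap_conjTranspose_eq_self {K : ι → Matrix m m R} (hTP : ∑ i, (K i)ᴴ * K i = 1)
    (hUnital : krausMap K 1 = 1) {X : Matrix m m R} (hX : krausMap K X = X) :
    krausMap (fun i => (K i)ᴴ) X = X :=
  krausMap_conjTranspose_eq_self_of_commute hTP (commute_of_krausMap_eq_self hTP hUnital hX)

theorem krausMap_eq_self_iff_krausMap_conjTranspose_eq_self {K : ι → Matrix m m R}
    (hTP : ∑ i, (K i)ᴴ * K i = 1) (hUnital : krausMap K 1 = 1) {X : Matrix m m R} :
    krausMap K X = X ↔ krausMap (fun i => (K i)ᴴ) X = X := by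
  have hTP' : ∑ i, (K i)ᴴᴴ * (K i)ᴴ = 1 := by
    simpa only [krausMap_one, conjTranspose_conjTranspose] using hUnital
  have hUnital' : krausMap (fun i => (K i)ᴴ) 1 = 1 := by
    simpa only [krausMap_one, conjTranspose_conjTranspose] using hTP
  refine ⟨krausMap_conjTranspose_eq_self hTP hUnital, fun hX => ?_⟩
  simpa only [conjTranspose_conjTranspose] using krausMap_conjTranspose_eq_self hTP' hUnital' hX

theorem stmt_6_general (K : ι → Matrix m m R) (Edag : Matrix m m R → Matrix m m R)
    (hTP : ∑ i, (K i)ᴴ * K i = 1) (hUnital : krausMap K 1 = 1)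
    (hAdj : ∀ A B, ((Edag A)ᴴ * B).trace = (Aᴴ * krausMap K B).trace) (X : Matrix m m R) :
    krausMap K X = X ↔ Edag X = X := by
  rw [eq_krausMap_conjTranspose_of_trace_adjoint hAdj]
  exact krausMap_eq_self_iff_krausMap_conjTranspose_eq_self hTP hUnital

end FixedPoints

/-- For a unital trace-preserving completely positive map `E` with Hilbert–Schmidt
adjoint `E†` (i.e. `Tr((E†(A))† B) = Tr(A† E(B))` for all `A, B`), the fixed-point
sets of `E` and `E†` coincide. -/
theorem stmt_6 {d : ℕ}
    (E Edag : Matrix (Fin d) (Fin d) ℂ →ₗ[ℂ] Matrix (Fin d) (Fin d) ℂ)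
    (hKraus : ∃ (n : ℕ) (K : Fin n → Matrix (Fin d) (Fin d) ℂ),
      (∀ X, E X = ∑ i, K i * X * (K i)ᴴ) ∧ ∑ i, (K i)ᴴ * K i = 1)
    (hUnital : E 1 = 1)
    (hAdj : ∀ A B : Matrix (Fin d) (Fin d) ℂ,
      ((Edag A)ᴴ * B).trace = (Aᴴ * E B).trace) :
    ∀ X : Matrix (Fin d) (Fin d) ℂ, E X = X ↔ Edag X = X := by
  obtain ⟨n, K, hE, hTP⟩ := hKraus
  obtain rfl : E = krausMap K := LinearMap.ext hE
  exact stmt_6_general K Edag hTP hUnital hAdj
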